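/- Fix d ∈ ℕ, a smooth function U : ℝ^d → ℝ with ‖∇²U‖_∞ < ∞, and a constant σ > 0, and let L be the kinetic Langevin operator L h = −y·∇_x h + (∇U(x) − y/σ)·∇_y h + Δ_y h. Then for every smooth h : ℝ^d × ℝ^d → (0,∞), pointwise on ℝ^d × ℝ^d, (1/2)[ L(|∇h|²/h) − ( 2∇h·∇(Lh)/h − |∇h|² Lh/h² ) ] ≥ −(‖∇²U‖_∞ + 1 + 1/σ) |∇h|²/h, where ∇ = (∇_x, ∇_y) is the full gradient in the 2d variables. -/

import Mathlib

noncomputable section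

open scoped BigOperators

open scoped BigOperators

/-- Partial derivative in the `i`-th `x`-direction of `f : ℝ^d × ℝ^d → ℝ`. -/
def pdx {d : ℕ} (i : Fin d) (f : (Fin d → ℝ) × (Fin d → ℝ) → ℝ)
    (z : (Fin d → ℝ) × (Fin d → ℝ)) : ℝ :=
  fderiv ℝ f z (Pi.single i (1 : ℝ), 0)

/-- Partial derivative in the `i`-th `y`-direction of `f : ℝ^d × ℝ^d → ℝ`. -/
def pdy {d : ℕ} (i : Fin d) (f : (Fin d → ℝ) × (Fin d → ℝ) → ℝ)
    (z : (Fin d → ℝ) × (Fin d → ℝ)) : ℝ :=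
  fderiv ℝ f z (0, Pi.single i (1 : ℝ))

/-- `i`-th component of `∇U`. -/
def gradU {d : ℕ} (U : (Fin d → ℝ) → ℝ) (i : Fin d) (x : Fin d → ℝ) : ℝ :=
  fderiv ℝ U x (Pi.single i (1 : ℝ))

/-- `(i,j)` entry of the Hessian matrix `∇²U`. -/
def hessU {d : ℕ} (U : (Fin d → ℝ) → ℝ) (i j : Fin d) (x : Fin d → ℝ) : ℝ :=
  fderiv ℝ (fun u => fderiv ℝ U u (Pi.single j (1 : ℝ))) x (Pi.single i (1 : ℝ))

/-- The kinetic Langevin operator `L h = −y·∇ₓh + (∇U(x) − y/σ)·∇_y h + Δ_y h`. -/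
def langevin {d : ℕ} (U : (Fin d → ℝ) → ℝ) (σ : ℝ)
    (f : (Fin d → ℝ) × (Fin d → ℝ) → ℝ) (z : (Fin d → ℝ) × (Fin d → ℝ)) : ℝ :=
  (∑ i, -(z.2 i) * pdx i f z)
    + (∑ i, (gradU U i z.1 - z.2 i / σ) * pdy i f z)
    + ∑ i, pdy i (fun w => pdy i f w) z

/-- The supremum over x of the Frobenius norm of the Hessian of U, i.e. ‖∇²U‖_∞. -/
def hessNormInf {d : ℕ} (U : (Fin d → ℝ) → ℝ) : ℝ :=
  ⨆ x : Fin d → ℝ, Real.sqrt (∑ i, ∑ j, (hessU U i j x) ^ 2)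

/-!
Write `L = b·∇ + ∑ᵢ ∂²_{vᵢ}` and `∂ₖ` for the partial derivatives in all variables. With `r = g / h`
one has `g² / h = r g`, from which `L (g² / h) = 2 r L g - r² L h + 2 h ∑ᵢ (∂_{vᵢ} r)²`. Taking
`g = ∂ₖ h` and summing over `k`, the first two terms reproduce the derivative of the Fisher
information along `L h` up to the commutators `∂ₖ L - L ∂ₖ = (∂ₖ b)·∇`, so that
`Γ(h) = h ∑ₖ ∑ᵢ (∂_{vᵢ} (∂ₖ h / h))² - h⁻¹ ∑ₖ ∂ₖ h (∂ₖ b)·∇h`.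
The first term is nonnegative. For the Langevin drift `b = (-y, ∇U - y/σ)` the sum in the second is
`∇ₓh·∇²U ∇_y h - ∇ₓh·∇_y h - |∇_y h|² / σ`, which Cauchy–Schwarz bounds by `½ (‖∇²U‖ + 1) |∇h|²`.
-/

section DirectionalDerivatives

open scoped Topology

variable {E : Type*} [NormedAddCommGroup E] [NormedSpace ℝ E]

/-- The directional derivative `∂ᵥ f`, with the direction first so that `dirDeriv v` is a
differential operator on functions; `pdx i` and `pdy i` are instances of it. -/
def dirDeriv (v : E) (f : E → ℝ) (z : E) : ℝ :=
  fderiv ℝ f z v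

variable {f g h : E → ℝ} {z : E}

theorem contDiffAt_dirDeriv {m n : WithTop ℕ∞} (v : E) (hf : ContDiffAt ℝ n f z)
    (hmn : m + 1 ≤ n) : ContDiffAt ℝ m (dirDeriv v f) z :=
  (hf.fderiv_right hmn).clm_apply contDiffAt_const

theorem differentiableAt_fderiv (hf : ContDiffAt ℝ 2 f z) :
    DifferentiableAt ℝ (fderiv ℝ f) z :=
  (hf.fderiv_right (m := 1) one_add_one_eq_two.le).differentiableAt one_ne_zero

theorem differentiableAt_dirDeriv (v : E) (hf : ContDiffAt ℝ 2 f z) :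
    DifferentiableAt ℝ (dirDeriv v f) z :=
  (differentiableAt_fderiv hf).clm_apply (differentiableAt_const v)

theorem dirDeriv_dirDeriv (u v : E) (hf : ContDiffAt ℝ 2 f z) :
    dirDeriv u (dirDeriv v f) z = fderiv ℝ (fderiv ℝ f) z u v := by
  change fderiv ℝ (fun w => fderiv ℝ f w v) z u = _
  simp [fderiv_clm_apply (differentiableAt_fderiv hf) (differentiableAt_const v)]

theorem dirDeriv_comm (u v : E) (hf : ContDiffAt ℝ 2 f z) :
    dirDeriv u (dirDeriv v f) z = dirDeriv v (dirDeriv u f) z := by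
  rw [dirDeriv_dirDeriv u v hf, dirDeriv_dirDeriv v u hf, hf.isSymmSndFDerivAt (by simp)]

theorem dirDeriv_div (v : E) (hg : DifferentiableAt ℝ g z) (hh : DifferentiableAt ℝ h z)
    (hz : h z ≠ 0) :
    dirDeriv v (fun w => g w / h w) z = (dirDeriv v g z - g z / h z * dirDeriv v h z) / h z := by
  have hinv : dirDeriv v (fun w => (h w)⁻¹) z = -dirDeriv v h z / h z ^ 2 := by
    change fderiv ℝ ((fun y => y⁻¹) ∘ h) z v = _
    rw [((hasDerivAt_inv hz).comp_hasFDerivAt z hh.hasFDerivAt).fderiv]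
    simp [dirDeriv, div_eq_mul_inv, mul_comm]
  have hmul : dirDeriv v (fun w => g w / h w) z =
      g z * dirDeriv v (fun w => (h w)⁻¹) z + (h z)⁻¹ * dirDeriv v g z := by
    simp only [dirDeriv, div_eq_mul_inv, fderiv_fun_mul hg (hh.fun_inv hz)]
    simp
  rw [hmul, hinv]
  field_simp
  ring

theorem dirDeriv_sq_div (v : E) (hg : DifferentiableAt ℝ g z) (hh : DifferentiableAt ℝ h z)
    (hz : h z ≠ 0) :
    dirDeriv v (fun w => g w ^ 2 / h w) z =
      2 * (g z / h z) * dirDeriv v g z - (g z / h z) ^ 2 * dirDeriv v h z := by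
  have hsq : dirDeriv v (fun w => g w ^ 2) z = 2 * g z * dirDeriv v g z := by
    simp [dirDeriv, fderiv_fun_pow 2 hg]
  rw [dirDeriv_div v (hg.fun_pow 2) hh hz, hsq]
  field_simp

theorem dirDeriv_dirDeriv_sq_div (v : E) (hg : ContDiffAt ℝ 2 g z) (hh : ContDiffAt ℝ 2 h z)
    (hz : h z ≠ 0) :
    dirDeriv v (dirDeriv v (fun w => g w ^ 2 / h w)) z =
      2 * (g z / h z) * dirDeriv v (dirDeriv v g) z
        - (g z / h z) ^ 2 * dirDeriv v (dirDeriv v h) z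
        + 2 * h z * dirDeriv v (fun w => g w / h w) z ^ 2 := by
  have hev : dirDeriv v (fun w => g w ^ 2 / h w) =ᶠ[𝓝 z] fun w =>
      2 * (g w / h w) * dirDeriv v g w - (g w / h w) ^ 2 * dirDeriv v h w := by
    filter_upwards [hg.eventually (by simp), hh.eventually (by simp),
      hh.continuousAt.eventually_ne hz] with w hgw hhw hw
    exact dirDeriv_sq_div v (hgw.differentiableAt two_ne_zero)
      (hhw.differentiableAt two_ne_zero) hw
  have dg := hg.differentiableAt two_ne_zero
  have dh := hh.differentiableAt two_ne_zero
  have dg' := differentiableAt_dirDeriv v hg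
  have dh' := differentiableAt_dirDeriv v hh
  have dr : DifferentiableAt ℝ (fun w => g w / h w) z := by
    simpa only [div_eq_mul_inv] using dg.fun_mul (dh.fun_inv hz)
  have hprod : dirDeriv v (dirDeriv v (fun w => g w ^ 2 / h w)) z =
      2 * (g z / h z) * dirDeriv v (dirDeriv v g) z
        - (g z / h z) ^ 2 * dirDeriv v (dirDeriv v h) z
        + 2 * dirDeriv v (fun w => g w / h w) z
          * (dirDeriv v g z - g z / h z * dirDeriv v h z) := by
    rw [dirDeriv, hev.fderiv_eq, fderiv_fun_sub (by fun_prop) (by fun_prop),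
      fderiv_fun_mul (by fun_prop) dg', fderiv_fun_mul (by fun_prop) dh',
      fderiv_const_mul dr, fderiv_fun_pow 2 dr]
    simp only [dirDeriv, Nat.add_one_sub_one, pow_one, nsmul_eq_mul, Nat.cast_ofNat, sub_apply,
      add_apply, smul_apply, smul_eq_mul]
    ring
  rw [hprod, dirDeriv_div v dg dh hz]
  field_simp

end DirectionalDerivatives

section ConstantDiffusion

open Filter Topology

variable {E ι κ : Type*} [NormedAddCommGroup E] [NormedSpace ℝ E] [Fintype ι] [Fintype κ]

/-- The second-order operator `b·∇ + ∑ᵢ ∂²_{vᵢ}` with drift `b` and constant diffusion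
directions `v`. Only the directions `v i` are diffusive, so the operator may be degenerate. -/
def diffusionOp (b : E → E) (v : ι → E) (f : E → ℝ) (z : E) : ℝ :=
  dirDeriv (b z) f z + ∑ i, dirDeriv (v i) (dirDeriv (v i) f) z

/-- The distorted dissipation `Γ_{L,Φ}(h) = ½ (L(Φ h) - DₕΦ(h)·L h)` of the Fisher information
`Φ(h) = ∑ₖ (∂_{eₖ} h)² / h` relative to a family of directions `e`. -/
def fisherDissipation (L : (E → ℝ) → E → ℝ) (e : κ → E) (h : E → ℝ) (z : E) : ℝ :=
  (1 / 2) * (L (fun w => (∑ k, dirDeriv (e k) h w ^ 2) / h w) z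
    - (2 * (∑ k, dirDeriv (e k) h z * dirDeriv (e k) (L h) z) / h z
      - (∑ k, dirDeriv (e k) h z ^ 2) * L h z / h z ^ 2))

variable {b : E → E} {f g h : E → ℝ} {z : E}

theorem diffusionOp_sum (b : E → E) (v : ι → E) {f : κ → E → ℝ}
    (hf : ∀ k, ContDiffAt ℝ 2 (f k) z) :
    diffusionOp b v (fun w => ∑ k, f k w) z = ∑ k, diffusionOp b v (f k) z := by
  have hsum (u : E) : dirDeriv u (fun w => ∑ k, f k w) =ᶠ[𝓝 z]
      fun w => ∑ k, dirDeriv u (f k) w := by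
    filter_upwards [eventually_all.2 fun k => (hf k).eventually (by simp)] with w hw
    simp [dirDeriv, fderiv_fun_sum fun k _ => (hw k).differentiableAt two_ne_zero]
  have hsum₂ (u : E) : dirDeriv u (dirDeriv u fun w => ∑ k, f k w) z =
      ∑ k, dirDeriv u (dirDeriv u (f k)) z := by
    rw [dirDeriv, (hsum u).fderiv_eq, fderiv_fun_sum fun k _ => differentiableAt_dirDeriv u (hf k)]
    simp [dirDeriv]
  simp only [diffusionOp, (hsum _).eq_of_nhds, hsum₂, Finset.sum_add_distrib]
  rw [Finset.sum_comm]

theorem diffusionOp_sq_div (b : E → E) (v : ι → E) (hg : ContDiffAt ℝ 2 g z)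
    (hh : ContDiffAt ℝ 2 h z) (hz : h z ≠ 0) :
    diffusionOp b v (fun w => g w ^ 2 / h w) z =
      2 * (g z / h z) * diffusionOp b v g z - (g z / h z) ^ 2 * diffusionOp b v h z
        + 2 * h z * ∑ i, dirDeriv (v i) (fun w => g w / h w) z ^ 2 := by
  simp only [diffusionOp, dirDeriv_dirDeriv_sq_div _ hg hh hz,
    dirDeriv_sq_div _ (hg.differentiableAt two_ne_zero) (hh.differentiableAt two_ne_zero) hz,
    Finset.sum_add_distrib, Finset.sum_sub_distrib, ← Finset.mul_sum]
  ring

theorem dirDeriv_drift (u : E) (hb : DifferentiableAt ℝ b z) (hf : ContDiffAt ℝ 2 f z) :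
    dirDeriv u (fun w => dirDeriv (b w) f w) z =
      dirDeriv (b z) (dirDeriv u f) z + dirDeriv (fderiv ℝ b z u) f z := by
  rw [dirDeriv_comm (b z) u hf, dirDeriv_dirDeriv u (b z) hf]
  simp [dirDeriv, fderiv_clm_apply (differentiableAt_fderiv hf) hb, add_comm]

theorem dirDeriv_diffusionOp (u : E) (v : ι → E) (hb : DifferentiableAt ℝ b z)
    (hf : ContDiffAt ℝ 3 f z) :
    dirDeriv u (diffusionOp b v f) z =
      diffusionOp b v (dirDeriv u f) z + dirDeriv (fderiv ℝ b z u) f z := by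
  have hf₂ : ContDiffAt ℝ 2 f z := hf.of_le (by norm_num)
  have hv (i : ι) : ContDiffAt ℝ 2 (dirDeriv (v i) f) z :=
    contDiffAt_dirDeriv _ hf (by norm_num)
  have hdrift : DifferentiableAt ℝ (fun w => dirDeriv (b w) f w) z :=
    (differentiableAt_fderiv hf₂).clm_apply hb
  have hdiff (i : ι) : DifferentiableAt ℝ (dirDeriv (v i) (dirDeriv (v i) f)) z :=
    differentiableAt_dirDeriv _ (hv i)
  have hsplit : dirDeriv u (diffusionOp b v f) z =
      dirDeriv u (fun w => dirDeriv (b w) f w) z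
        + ∑ i, dirDeriv u (dirDeriv (v i) (dirDeriv (v i) f)) z := by
    change fderiv ℝ (fun w => dirDeriv (b w) f w + ∑ i, dirDeriv (v i) (dirDeriv (v i) f) w) z u = _
    rw [fderiv_fun_add hdrift (DifferentiableAt.fun_sum fun i _ => hdiff i),
      fderiv_fun_sum fun i _ => hdiff i]
    simp [dirDeriv]
  have hcomm (i : ι) : dirDeriv u (dirDeriv (v i) (dirDeriv (v i) f)) z =
      dirDeriv (v i) (dirDeriv (v i) (dirDeriv u f)) z := by
    have hev : dirDeriv u (dirDeriv (v i) f) =ᶠ[𝓝 z] dirDeriv (v i) (dirDeriv u f) := by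
      filter_upwards [hf₂.eventually (by simp)] with w hw using dirDeriv_comm u (v i) hw
    rw [dirDeriv_comm u (v i) (hv i), dirDeriv, hev.fderiv_eq, dirDeriv]
  rw [hsplit, dirDeriv_drift u hb hf₂, diffusionOp]
  simp only [hcomm]
  ring

theorem fisherDissipation_diffusionOp (v : ι → E) (e : κ → E) (hb : DifferentiableAt ℝ b z)
    (hh : ContDiffAt ℝ 3 h z) (hz : h z ≠ 0) :
    fisherDissipation (diffusionOp b v) e h z =
      h z * ∑ k, ∑ i, dirDeriv (v i) (fun w => dirDeriv (e k) h w / h w) z ^ 2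
        - (∑ k, dirDeriv (e k) h z * dirDeriv (fderiv ℝ b z (e k)) h z) / h z := by
  have hh₂ : ContDiffAt ℝ 2 h z := hh.of_le (by norm_num)
  have he (k : κ) : ContDiffAt ℝ 2 (dirDeriv (e k) h) z :=
    contDiffAt_dirDeriv _ hh (by norm_num)
  have hfisher : diffusionOp b v (fun w => (∑ k, dirDeriv (e k) h w ^ 2) / h w) z =
      ∑ k, diffusionOp b v (fun w => dirDeriv (e k) h w ^ 2 / h w) z := by
    simp only [Finset.sum_div]
    exact diffusionOp_sum b v fun k => ((he k).pow 2).div hh₂ hz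
  have hterm (k : κ) : diffusionOp b v (fun w => dirDeriv (e k) h w ^ 2 / h w) z =
      2 / h z * (dirDeriv (e k) h z * diffusionOp b v (dirDeriv (e k) h) z)
        - diffusionOp b v h z / h z ^ 2 * dirDeriv (e k) h z ^ 2
        + 2 * h z * ∑ i, dirDeriv (v i) (fun w => dirDeriv (e k) h w / h w) z ^ 2 := by
    rw [diffusionOp_sq_div b v (he k) hh₂ hz]
    ring
  simp only [fisherDissipation, hfisher, hterm, dirDeriv_diffusionOp _ v hb hh, mul_add,
    Finset.sum_add_distrib, Finset.sum_sub_distrib, ← Finset.mul_sum]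
  ring

theorem neg_commutator_div_le_fisherDissipation (v : ι → E) (e : κ → E)
    (hb : DifferentiableAt ℝ b z) (hh : ContDiffAt ℝ 3 h z) (hpos : 0 < h z) :
    -(∑ k, dirDeriv (e k) h z * dirDeriv (fderiv ℝ b z (e k)) h z) / h z ≤
      fisherDissipation (diffusionOp b v) e h z := by
  rw [fisherDissipation_diffusionOp v e hb hh hpos.ne', neg_div, neg_le_sub_iff_le_add,
    le_add_iff_nonneg_left]
  positivity

end ConstantDiffusion

theorem sum_mul_sum_mul_le_sqrt_mul_add {ι κ : Type*} [Fintype ι] [Fintype κ] (H : ι → κ → ℝ)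
    (a : ι → ℝ) (b : κ → ℝ) :
    ∑ i, a i * ∑ j, H i j * b j ≤
      √(∑ i, ∑ j, H i j ^ 2) * ((∑ i, a i ^ 2 + ∑ j, b j ^ 2) / 2) := by
  have hab : ∑ p : ι × κ, (a p.1 * b p.2) ^ 2 = (∑ i, a i ^ 2) * ∑ j, b j ^ 2 := by
    simp only [mul_pow, Fintype.sum_prod_type, Finset.sum_mul_sum]
  calc ∑ i, a i * ∑ j, H i j * b j
      = ∑ p : ι × κ, H p.1 p.2 * (a p.1 * b p.2) := by
        simp only [Fintype.sum_prod_type, Finset.mul_sum, mul_left_comm]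
    _ ≤ √(∑ p : ι × κ, H p.1 p.2 ^ 2) * √(∑ p : ι × κ, (a p.1 * b p.2) ^ 2) :=
        Real.sum_mul_le_sqrt_mul_sqrt _ _ _
    _ = √(∑ i, ∑ j, H i j ^ 2) * √((∑ i, a i ^ 2) * ∑ j, b j ^ 2) := by
        rw [hab, Fintype.sum_prod_type]
    _ ≤ √(∑ i, ∑ j, H i j ^ 2) * ((∑ i, a i ^ 2 + ∑ j, b j ^ 2) / 2) := by
        gcongr
        refine Real.sqrt_le_iff.2 ⟨by positivity, ?_⟩
        linarith [sq_nonneg (∑ i, a i ^ 2 - ∑ j, b j ^ 2)]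

section Langevin

variable {d : ℕ} {U : (Fin d → ℝ) → ℝ} {h : (Fin d → ℝ) × (Fin d → ℝ) → ℝ}
  {z : (Fin d → ℝ) × (Fin d → ℝ)}

/-- The drift `(x, y) ↦ (-y, ∇U(x) - y/σ)` of the kinetic Langevin operator. -/
def langevinDrift (U : (Fin d → ℝ) → ℝ) (σ : ℝ) (z : (Fin d → ℝ) × (Fin d → ℝ)) :
    (Fin d → ℝ) × (Fin d → ℝ) :=
  (-z.2, fun i => gradU U i z.1 - z.2 i / σ)

/-- The directions `∂_{y₁}, …, ∂_{y_d}` in which the kinetic Langevin operator diffuses. -/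
def velocityBasis (i : Fin d) : (Fin d → ℝ) × (Fin d → ℝ) :=
  (0, Pi.single i 1)

/-- The standard basis of phase space, positions first, whose directional derivatives are the
components of the full gradient `(∇ₓ, ∇_y)`. -/
def phaseBasis : Fin d ⊕ Fin d → (Fin d → ℝ) × (Fin d → ℝ) :=
  Sum.elim (fun i => (Pi.single i 1, 0)) velocityBasis

theorem dirDeriv_eq_sum_pdx_add_sum_pdy (u : (Fin d → ℝ) × (Fin d → ℝ))
    (f : (Fin d → ℝ) × (Fin d → ℝ) → ℝ) (z : (Fin d → ℝ) × (Fin d → ℝ)) :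
    dirDeriv u f z = ∑ i, u.1 i * pdx i f z + ∑ i, u.2 i * pdy i f z := by
  have hu : u = ∑ i, u.1 i • (Pi.single i 1, 0) + ∑ i, u.2 i • (0, Pi.single i 1) := by
    ext j <;> simp [Prod.fst_sum, Prod.snd_sum, Pi.single_apply]
  conv_lhs => rw [dirDeriv, hu]
  simp only [map_add, map_sum, map_smul, smul_eq_mul, pdx, pdy]

theorem langevin_eq_diffusionOp (U : (Fin d → ℝ) → ℝ) (σ : ℝ) :
    langevin U σ = diffusionOp (langevinDrift U σ) velocityBasis := by
  funext f z
  simp only [diffusionOp, dirDeriv_eq_sum_pdx_add_sum_pdy (langevinDrift U σ z)]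
  rfl

theorem hasFDerivAt_langevinDrift (σ : ℝ) (hU : ContDiffAt ℝ 2 U z.1) :
    HasFDerivAt (langevinDrift U σ)
      ((-ContinuousLinearMap.snd ℝ (Fin d → ℝ) (Fin d → ℝ)).prod
        ((ContinuousLinearMap.pi fun i => fderiv ℝ (gradU U i) z.1).comp
            (ContinuousLinearMap.fst ℝ (Fin d → ℝ) (Fin d → ℝ))
          - σ⁻¹ • ContinuousLinearMap.snd ℝ (Fin d → ℝ) (Fin d → ℝ))) z := by
  have hgrad : HasFDerivAt (fun x i => gradU U i x)
      (ContinuousLinearMap.pi fun i => fderiv ℝ (gradU U i) z.1) z.1 :=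
    hasFDerivAt_pi.2 fun i => (differentiableAt_dirDeriv (Pi.single i 1) hU).hasFDerivAt
  have hdrift : langevinDrift U σ = fun w => (-w.2, (fun i => gradU U i w.1) - σ⁻¹ • w.2) := by
    funext w
    ext i <;> simp [langevinDrift, div_eq_inv_mul]
  rw [hdrift]
  exact hasFDerivAt_snd.neg.prodMk
    ((hgrad.comp z hasFDerivAt_fst).sub (hasFDerivAt_snd.const_smul σ⁻¹))

theorem sum_dirDeriv_mul_commutator_langevin (σ : ℝ) (hU : ContDiffAt ℝ 2 U z.1) :
    ∑ k, dirDeriv (phaseBasis k) h z *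
        dirDeriv (fderiv ℝ (langevinDrift U σ) z (phaseBasis k)) h z =
      ∑ i, pdx i h z * ∑ j, hessU U i j z.1 * pdy j h z
        - ∑ i, pdy i h z * pdx i h z - (1 / σ) * ∑ i, pdy i h z ^ 2 := by
  have hgradU (i j : Fin d) : fderiv ℝ (gradU U j) z.1 (Pi.single i 1) = hessU U i j z.1 := rfl
  have hx (i : Fin d) :
      dirDeriv (fderiv ℝ (langevinDrift U σ) z (Pi.single i 1, 0)) h z =
        ∑ j, hessU U i j z.1 * pdy j h z := by
    rw [dirDeriv_eq_sum_pdx_add_sum_pdy, (hasFDerivAt_langevinDrift σ hU).fderiv]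
    simp [hgradU]
  have hy (i : Fin d) :
      dirDeriv (fderiv ℝ (langevinDrift U σ) z (velocityBasis i)) h z =
        -pdx i h z - 1 / σ * pdy i h z := by
    rw [dirDeriv_eq_sum_pdx_add_sum_pdy, (hasFDerivAt_langevinDrift σ hU).fderiv]
    simp [velocityBasis, Pi.single_apply, sub_eq_add_neg]
  have hsum_y : ∑ i, pdy i h z * (-pdx i h z - 1 / σ * pdy i h z) =
      -∑ i, pdy i h z * pdx i h z - 1 / σ * ∑ i, pdy i h z ^ 2 := by
    simp only [mul_sub, mul_neg, mul_left_comm _ (1 / σ), ← sq, Finset.sum_sub_distrib,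
      Finset.sum_neg_distrib, ← Finset.mul_sum]
  simp only [Fintype.sum_sum_type, phaseBasis, Sum.elim_inl, Sum.elim_inr, hx, hy]
  change ∑ i, pdx i h z * _ + ∑ i, pdy i h z * _ = _
  rw [hsum_y]
  ring

theorem le_fisherDissipation_langevin (σ : ℝ) (hU : ContDiffAt ℝ 2 U z.1)
    (hh : ContDiffAt ℝ 3 h z) (hpos : 0 < h z) :
    (1 / σ * ∑ i, pdy i h z ^ 2
        - (√(∑ i, ∑ j, hessU U i j z.1 ^ 2) + 1) / 2
          * (∑ i, pdx i h z ^ 2 + ∑ i, pdy i h z ^ 2)) / h z ≤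
      fisherDissipation (langevin U σ) phaseBasis h z := by
  have hHess := sum_mul_sum_mul_le_sqrt_mul_add (fun i j => hessU U i j z.1)
    (fun i => pdx i h z) (fun j => pdy j h z)
  have hcross : 0 ≤ ∑ i, pdx i h z ^ 2 + ∑ i, pdy i h z ^ 2 + 2 * ∑ i, pdy i h z * pdx i h z := by
    rw [Finset.mul_sum, ← Finset.sum_add_distrib, ← Finset.sum_add_distrib]
    exact Finset.sum_nonneg fun i _ => by linarith [sq_nonneg (pdx i h z + pdy i h z)]
  rw [langevin_eq_diffusionOp]
  refine le_trans ?_ (neg_commutator_div_le_fisherDissipation velocityBasis phaseBasis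
    (hasFDerivAt_langevinDrift σ hU).differentiableAt hh hpos)
  rw [sum_dirDeriv_mul_commutator_langevin σ hU]
  gcongr
  linarith

end Langevin

theorem stmt7_general {d : ℕ} {U : (Fin d → ℝ) → ℝ} {σ : ℝ} (hσ : 0 < σ)
    {h : (Fin d → ℝ) × (Fin d → ℝ) → ℝ} {z : (Fin d → ℝ) × (Fin d → ℝ)}
    (hU : ContDiffAt ℝ 2 U z.1) (hh : ContDiffAt ℝ 3 h z) (hpos : 0 < h z) :
    (1 / 2) * (langevin U σ
        (fun w => ((∑ i, (pdx i h w) ^ 2) + ∑ i, (pdy i h w) ^ 2) / h w) z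
      - (2 * ((∑ i, pdx i h z * pdx i (langevin U σ h) z)
            + ∑ i, pdy i h z * pdy i (langevin U σ h) z) / h z
        - ((∑ i, (pdx i h z) ^ 2) + ∑ i, (pdy i h z) ^ 2)
            * langevin U σ h z / (h z) ^ 2))
      ≥ -((√(∑ i, ∑ j, (hessU U i j z.1) ^ 2) + 1) / 2)
          * ((∑ i, (pdx i h z) ^ 2) + ∑ i, (pdy i h z) ^ 2) / h z := by
  have hdiss := le_fisherDissipation_langevin σ hU hh hpos
  simp only [fisherDissipation, Fintype.sum_sum_type] at hdiss
  refine le_trans ?_ hdiss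
  have hfriction : 0 ≤ 1 / σ * ∑ i, pdy i h z ^ 2 := by positivity
  gcongr
  linarith

/-- For the kinetic Langevin operator and the Fisher information functional
Φ₂(h) = |∇h|²/h (full gradient in the 2d variables), pointwise
Γ_{L,Φ₂}(h) ≥ −(‖∇²U‖_∞ + 1 + 1/σ)|∇h|²/h for every smooth positive h. -/
theorem stmt7 {d : ℕ} (U : (Fin d → ℝ) → ℝ) (hU : ContDiff ℝ (⊤ : ℕ∞) U)
    (hK : BddAbove (Set.range fun x : Fin d → ℝ =>
      Real.sqrt (∑ i, ∑ j, (hessU U i j x) ^ 2)))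
    (σ : ℝ) (hσ : 0 < σ)
    (h : (Fin d → ℝ) × (Fin d → ℝ) → ℝ) (hh : ContDiff ℝ (⊤ : ℕ∞) h)
    (hpos : ∀ z, 0 < h z)
    (z : (Fin d → ℝ) × (Fin d → ℝ)) :
    (1 / 2) * (langevin U σ
        (fun w => ((∑ i, (pdx i h w) ^ 2) + ∑ i, (pdy i h w) ^ 2) / h w) z
      - (2 * ((∑ i, pdx i h z * pdx i (langevin U σ h) z)
            + ∑ i, pdy i h z * pdy i (langevin U σ h) z) / h z
        - ((∑ i, (pdx i h z) ^ 2) + ∑ i, (pdy i h z) ^ 2)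
            * langevin U σ h z / (h z) ^ 2))
      ≥ -(hessNormInf U + 1 + 1 / σ)
          * ((∑ i, (pdx i h z) ^ 2) + ∑ i, (pdy i h z) ^ 2) / h z := by
  have hHess : √(∑ i, ∑ j, hessU U i j z.1 ^ 2) ≤ hessNormInf U := le_ciSup hK z.1
  refine ge_trans (stmt7_general hσ (contDiff_infty.1 hU 2).contDiffAt
    (contDiff_infty.1 hh 3).contDiffAt (hpos z)) ?_
  have hz := hpos z
  gcongr
  linarith [one_div_pos.2 hσ, Real.sqrt_nonneg (∑ i, ∑ j, hessU U i j z.1 ^ 2)]
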